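/- Let G = (V,E) be a finite simple graph with maximum degree Δ_G ≥ 1, let λ > 0, and let e ∈ E. Then there exists a finite tree T (a connected acyclic finite simple graph) of maximum degree at most Δ_G and an edge e' of T such that Σ_{f ∈ E, f ≠ e} |I_G(e→f)| ≤ Σ_{g ∈ E_T, g ≠ e'} |I_T(e'→g)|, where the influences in T are taken with respect to the monomer-dimer model on T with the same fugacity λ. -/

import Mathlib

/-!
The tree is a self-avoiding-walk tree in the style of Godsil, and influences of edges are reduced to
influences of vertices.

For a graph `H` and a vertex `r`, let `R(H, r) = Z(H - r) / Z(H)` be the probability that `r` is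
uncovered (`Rf`), let `D(H, r, f)` be the change of the marginal of `f` when `r` is deleted (`Df`),
and let `S(H, r) = ∑ |D(H, r, f)|` over `f` (`Sf`). For an edge `ab` of `J`, splitting the matchings
according to whether they contain `ab` gives

* `1 / R(J, a) = 1 / R(J - ab, a) + λ R(J - a, b)`  (`Rf_step`);
* `D(J, a, f) / R(J, a) = D(J - ab, a, f) / R(J - ab, a) - λ R(J - a, b) D(J - a, b, f)` for
  `f ≠ ab`, while the term for `f = ab` is `λ R(J - a, b)`  (`Df_step`, `Df_step_self`).

Hence `S(J, a) / R(J, a) ≤ S(J - ab, a) / R(J - ab, a) + λ R(J - a, b) (1 + S(J - a, b))`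
(`Sf_le_step`), with equality when `J` consists of two disjoint graphs joined by the edge `ab`, since
then every `f` sees only one of the two terms (`Sf_join`). Induction on the number of edges therefore
replaces `(H, r)` by a rooted tree with the same `R`, at least the same `S`, and no larger degrees:
join the trees of `(H - rb, r)` and `(H - r, b)` by an edge between their roots (`exists_tree`).

Finally, the influence of the edge `ab` of `G` on `f` is `-(D(G - ab, a, f) + D(G - a, b, f))`
(`mdInfluence_eq`), so its total influence is at most `S(G - ab, a) + S(G - a, b)`. For the edge
joining the trees of `(G - ab, a)` and `(G - a, b)` this sum is exact (`totalInfluence_join`).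
-/

open Finset

attribute [local instance] Classical.propDecidable

noncomputable section

variable {V : Type} [Fintype V] [DecidableEq V]

/-- `M` is (the edge set of) a matching of `G`: all its members are edges of `G` and no two
distinct members share a vertex. -/
def IsMatchingSet (G : SimpleGraph V) (M : Finset (Sym2 V)) : Prop :=
  ↑M ⊆ G.edgeSet ∧ ∀ e ∈ M, ∀ f ∈ M, e ≠ f → ∀ v : V, v ∈ e → v ∉ f

/-- Weight `λ^{|M|}` of a matching `M` in the monomer-dimer model (zero otherwise). -/
def mdWeight (G : SimpleGraph V) (lam : ℝ) (M : Finset (Sym2 V)) : ℝ :=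
  if IsMatchingSet G M then lam ^ M.card else 0

/-- Total monomer-dimer weight of the event `P`. -/
def mdMass (G : SimpleGraph V) (lam : ℝ) (P : Finset (Sym2 V) → Prop) : ℝ :=
  ∑ M : Finset (Sym2 V), if P M then mdWeight G lam M else 0

/-- Conditional probability of the event `P` given the event `Q` under the monomer-dimer
distribution on `G` with fugacity `λ`. -/
def mdCondPr (G : SimpleGraph V) (lam : ℝ) (P Q : Finset (Sym2 V) → Prop) : ℝ :=
  mdMass G lam (fun M => P M ∧ Q M) / mdMass G lam Q

/-- Pairwise influence `I_G^τ(e→f)` of edge `e` on edge `f`, conditioned on an event `Q`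
(describing a boundary condition):
`Pr[f ∈ M | e ∈ M, Q] − Pr[f ∈ M | e ∉ M, Q]`.
(Here `e ∈ M`, i.e. `σ_e = 0`, means that `e` belongs to the matching.) -/
def mdInfluence (G : SimpleGraph V) (lam : ℝ) (e f : Sym2 V)
    (Q : Finset (Sym2 V) → Prop) : ℝ :=
  mdCondPr G lam (fun M => f ∈ M) (fun M => e ∈ M ∧ Q M)
    - mdCondPr G lam (fun M => f ∈ M) (fun M => e ∉ M ∧ Q M)

end

/-- Total absolute influence of the edge `e'` on the other edges of `T` in the
monomer-dimer model on `T` with fugacity `λ`. -/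
noncomputable def totalInfluence (W : Type) [Fintype W] [DecidableEq W]
    (T : SimpleGraph W) (lam : ℝ) (e' : Sym2 W) : ℝ :=
  ∑ g : Sym2 W, if g ∈ T.edgeSet ∧ g ≠ e' then
    |mdInfluence T lam e' g (fun _ => True)| else 0

/-! ### Vertex deletion, uncovered probabilities and vertex influences -/

section Basic

variable {V : Type} [Fintype V]

/-- The graph `G` with all edges at `a` removed. The vertex `a` is kept, as an isolated vertex, so
that deletion does not change the vertex type; isolated vertices do not affect matchings. -/
def vdel {V : Type} (G : SimpleGraph V) (a : V) : SimpleGraph V where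
  Adj x y := G.Adj x y ∧ x ≠ a ∧ y ≠ a
  symm := ⟨fun _ _ h => ⟨h.1.symm, h.2.2, h.2.1⟩⟩
  loopless := ⟨fun _ h => G.loopless.irrefl _ h.1⟩

/-- Matching polynomial (partition function) of `G` at fugacity `lam`. -/
noncomputable def Zf (G : SimpleGraph V) (lam : ℝ) : ℝ := mdMass G lam (fun _ => True)

/-- Total weight of the matchings of `G` that contain `f`. -/
noncomputable def Nf (G : SimpleGraph V) (lam : ℝ) (f : Sym2 V) : ℝ :=
  mdMass G lam (fun M => f ∈ M)

/-- Probability that the vertex `a` is left uncovered by the random matching. -/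
noncomputable def Rf (G : SimpleGraph V) (lam : ℝ) (a : V) : ℝ := Zf (vdel G a) lam / Zf G lam

/-- Change in the marginal of the edge `f` caused by deleting the vertex `a`. -/
noncomputable def Df (G : SimpleGraph V) (lam : ℝ) (a : V) (f : Sym2 V) : ℝ :=
  Nf G lam f / Zf G lam - Nf (vdel G a) lam f / Zf (vdel G a) lam

/-- Total absolute influence of the vertex `a`. The sum may run over all pairs, since pairs that
are not edges contribute `0`. -/
noncomputable def Sf (G : SimpleGraph V) (lam : ℝ) (a : V) : ℝ := ∑ f, |Df G lam a f|

lemma mem_edgeSet_vdel {V : Type} (G : SimpleGraph V) (a : V) (f : Sym2 V) :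
    f ∈ (vdel G a).edgeSet ↔ f ∈ G.edgeSet ∧ a ∉ f := by
  induction f using Sym2.ind with
  | _ x y =>
    simp only [SimpleGraph.mem_edgeSet, vdel, Sym2.mem_iff, not_or]
    exact ⟨fun h => ⟨h.1, Ne.symm h.2.1, Ne.symm h.2.2⟩, fun h => ⟨h.1, Ne.symm h.2.1, Ne.symm h.2.2⟩⟩

lemma mdWeight_nonneg {V : Type} (G : SimpleGraph V) {lam : ℝ} (hl : 0 < lam) (M : Finset (Sym2 V)) :
    0 ≤ mdWeight G lam M := by
  unfold mdWeight; split_ifs <;> positivity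

lemma Zf_pos (G : SimpleGraph V) {lam : ℝ} (hl : 0 < lam) : 0 < Zf G lam := by
  unfold Zf mdMass
  simp only [if_true]
  have h : mdWeight G lam ∅ = 1 := by
    unfold mdWeight
    rw [if_pos ⟨by simp, by simp⟩]; simp
  have := Finset.single_le_sum (fun M _ => mdWeight_nonneg G hl M) (Finset.mem_univ ∅)
  linarith

lemma Rf_pos (G : SimpleGraph V) {lam : ℝ} (hl : 0 < lam) (a : V) : 0 < Rf G lam a :=
  div_pos (Zf_pos _ hl) (Zf_pos _ hl)

lemma Nf_eq_zero (G : SimpleGraph V) (lam : ℝ) {f : Sym2 V} (hf : f ∉ G.edgeSet) :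
    Nf G lam f = 0 := by
  unfold Nf mdMass
  refine Finset.sum_eq_zero fun M _ => ?_
  split_ifs with h
  · exact if_neg fun hM => hf (hM.1 h)
  · rfl

lemma Df_eq_zero (G : SimpleGraph V) (lam : ℝ) (a : V) {f : Sym2 V} (hf : f ∉ G.edgeSet) :
    Df G lam a f = 0 := by
  rw [Df, Nf_eq_zero G lam hf, Nf_eq_zero _ lam fun h => hf ((mem_edgeSet_vdel G a f).1 h).1]
  simp

lemma mdMass_congr (G : SimpleGraph V) (lam : ℝ) {P Q : Finset (Sym2 V) → Prop}
    (h : ∀ M, P M ↔ Q M) : mdMass G lam P = mdMass G lam Q := by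
  have : P = Q := funext fun M => propext (h M)
  rw [this]

lemma mdMass_split (G : SimpleGraph V) (lam : ℝ) (P Q : Finset (Sym2 V) → Prop) :
    mdMass G lam P = mdMass G lam (fun M => P M ∧ ¬ Q M) + mdMass G lam (fun M => P M ∧ Q M) := by
  unfold mdMass
  rw [← Finset.sum_add_distrib]
  refine Finset.sum_congr rfl fun M _ => ?_
  by_cases hP : P M <;> by_cases hQ : Q M <;> simp [hP, hQ]

/-! ### Deleting and contracting one edge -/

/-- Matchings that avoid `e` are the matchings of `J - e`. -/
lemma mdMass_not_mem (J : SimpleGraph V) (lam : ℝ) (e : Sym2 V) (P : Finset (Sym2 V) → Prop) :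
    mdMass J lam (fun M => P M ∧ e ∉ M) = mdMass (J.deleteEdges {e}) lam P := by
  unfold mdMass
  refine Finset.sum_congr rfl fun M _ => ?_
  have key : IsMatchingSet (J.deleteEdges {e}) M ↔ IsMatchingSet J M ∧ e ∉ M := by
    unfold IsMatchingSet
    rw [SimpleGraph.edgeSet_deleteEdges, Set.subset_sdiff]
    simp only [Set.disjoint_singleton_right, Finset.mem_coe]
    tauto
  unfold mdWeight
  by_cases hP : P M <;> by_cases hM : IsMatchingSet J M <;> by_cases he : e ∈ M <;>
    simp [key, hP, hM, he]

lemma isMatchingSet_insert {V : Type} (J : SimpleGraph V) {a b : V} (hab : J.Adj a b) (M : Finset (Sym2 V)) :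
    (IsMatchingSet J (insert s(a, b) M) ∧ s(a, b) ∉ M) ↔ IsMatchingSet (vdel (vdel J a) b) M := by
  constructor
  · rintro ⟨⟨h1, h2⟩, h3⟩
    refine ⟨fun f hf => ?_, fun f hf g hg => h2 f (by simp_all) g (by simp_all)⟩
    have hne : s(a, b) ≠ f := by rintro rfl; exact h3 hf
    have h4 := h2 s(a, b) (by simp) f (by simp_all) hne
    rw [mem_edgeSet_vdel, mem_edgeSet_vdel]
    exact ⟨⟨h1 (by simp_all), h4 a (by simp)⟩, h4 b (by simp)⟩
  · rintro ⟨h1, h2⟩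
    have h5 : ∀ f ∈ M, (f ∈ J.edgeSet ∧ a ∉ f) ∧ b ∉ f := fun f hf => by
      have := h1 hf
      rwa [mem_edgeSet_vdel, mem_edgeSet_vdel] at this
    refine ⟨⟨fun f hf => ?_, fun f hf g hg hfg v hv hv' => ?_⟩, fun h => (h5 _ h).2 (by simp)⟩
    · rcases Finset.mem_insert.1 hf with rfl | hf
      · exact hab
      · exact (h5 f hf).1.1
    · rcases Finset.mem_insert.1 hf with rfl | hf' <;> rcases Finset.mem_insert.1 hg with rfl | hg'
      · exact hfg rfl
      · rcases Sym2.mem_iff.1 hv with rfl | rfl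
        · exact (h5 g hg').1.2 hv'
        · exact (h5 g hg').2 hv'
      · rcases Sym2.mem_iff.1 hv' with rfl | rfl
        · exact (h5 f hf').1.2 hv
        · exact (h5 f hf').2 hv
      · exact h2 f hf' g hg' hfg v hv hv'

/-- Removing the edge `ab` from a matching that contains it leaves a matching of `J - a - b`. -/
lemma mdMass_mem (J : SimpleGraph V) (lam : ℝ) {a b : V} (hab : J.Adj a b)
    (P : Finset (Sym2 V) → Prop) :
    mdMass J lam (fun M => P M ∧ s(a, b) ∈ M) =
      lam * mdMass (vdel (vdel J a) b) lam (fun M => P (insert s(a, b) M)) := by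
  unfold mdMass
  rw [Finset.mul_sum]
  have hsub : ∑ M : Finset (Sym2 V), lam * (if P (insert s(a, b) M) then
        mdWeight (vdel (vdel J a) b) lam M else 0) =
      ∑ M ∈ Finset.univ.filter (fun M => s(a, b) ∉ M), lam * (if P (insert s(a, b) M) then
        mdWeight (vdel (vdel J a) b) lam M else 0) := by
    refine (Finset.sum_subset (Finset.subset_univ _) fun M _ hM => ?_).symm
    have hM' : s(a, b) ∈ M := by simpa using hM
    have : mdWeight (vdel (vdel J a) b) lam M = 0 :=
      if_neg fun h => ((isMatchingSet_insert J hab M).2 h).2 hM'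
    simp [this]
  rw [hsub]
  symm
  refine Finset.sum_of_injOn (fun M => insert s(a, b) M) ?_ (fun _ _ => by simp) ?_ ?_
  · intro M hM N hN h
    have hM : s(a, b) ∉ M := by simpa using hM
    have hN : s(a, b) ∉ N := by simpa using hN
    have h' := congrArg (fun X => Finset.erase X s(a, b)) h
    simpa [Finset.erase_insert hM, Finset.erase_insert hN] using h'
  · intro M _ hM
    refine if_neg fun h => hM ⟨M.erase s(a, b), by simp, Finset.insert_erase h.2⟩
  · intro M hM
    have hM : s(a, b) ∉ M := by simpa using hM
    have h := isMatchingSet_insert J hab M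
    by_cases hP : P (insert s(a, b) M) <;>
      by_cases hK : IsMatchingSet (vdel (vdel J a) b) M <;>
      simp_all [mdWeight, pow_succ, mul_comm]

lemma vdel_deleteEdges {V : Type} (J : SimpleGraph V) (a b : V) : vdel (J.deleteEdges {s(a, b)}) a = vdel J a := by
  ext x y
  simp only [vdel, SimpleGraph.deleteEdges_adj, Set.mem_singleton_iff, Sym2.eq_iff]
  tauto

lemma Zf_step (J : SimpleGraph V) (lam : ℝ) {a b : V} (hab : J.Adj a b) :
    Zf J lam = Zf (J.deleteEdges {s(a, b)}) lam + lam * Zf (vdel (vdel J a) b) lam := by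
  unfold Zf
  rw [mdMass_split J lam _ (fun M => s(a, b) ∈ M), mdMass_not_mem, mdMass_mem J lam hab]

lemma Nf_step (J : SimpleGraph V) (lam : ℝ) {a b : V} (hab : J.Adj a b)
    {f : Sym2 V} (hf : f ≠ s(a, b)) :
    Nf J lam f = Nf (J.deleteEdges {s(a, b)}) lam f + lam * Nf (vdel (vdel J a) b) lam f := by
  unfold Nf
  rw [mdMass_split J lam _ (fun M => s(a, b) ∈ M), mdMass_not_mem, mdMass_mem J lam hab]
  congr 2
  exact mdMass_congr _ _ fun M => by simp [hf]

lemma Nf_step_self (J : SimpleGraph V) (lam : ℝ) {a b : V} (hab : J.Adj a b) :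
    Nf J lam s(a, b) = lam * Zf (vdel (vdel J a) b) lam := by
  have := mdMass_mem J lam hab (fun _ => True)
  simpa [Nf, Zf] using this


/-! ### Recursion for vertex influences -/

/-- One edge of the self-avoiding-walk recursion for the probability that a vertex is uncovered. -/
lemma Rf_step (J : SimpleGraph V) {lam : ℝ} (hl : 0 < lam) {a b : V} (hab : J.Adj a b) :
    (Rf J lam a)⁻¹ = (Rf (J.deleteEdges {s(a, b)}) lam a)⁻¹ + lam * Rf (vdel J a) lam b := by
  have h1 := Zf_pos J hl
  have h2 := Zf_pos (vdel J a) hl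
  simp only [Rf, vdel_deleteEdges, inv_div]
  rw [Zf_step J lam hab]
  ring

/-- For `f ≠ ab`, the influence of `a` on `f` splits into the influence within `J - ab` and the one
passed on through the edge `ab`. -/
lemma Df_step (J : SimpleGraph V) {lam : ℝ} (hl : 0 < lam) {a b : V} (hab : J.Adj a b)
    {f : Sym2 V} (hf : f ≠ s(a, b)) :
    Df J lam a f = Rf J lam a * ((Rf (J.deleteEdges {s(a, b)}) lam a)⁻¹ *
      Df (J.deleteEdges {s(a, b)}) lam a f - lam * Rf (vdel J a) lam b * Df (vdel J a) lam b f) := by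
  have h1 := Zf_pos J hl
  have h2 := Zf_pos (vdel J a) hl
  have h3 := Zf_pos (vdel (vdel J a) b) hl
  have h4 := Zf_pos (J.deleteEdges {s(a, b)}) hl
  have hZ := Zf_step J lam hab
  have hN := Nf_step J lam hab hf
  simp only [Rf, Df, vdel_deleteEdges, inv_div]
  rw [hN]
  field_simp
  rw [hZ]
  ring

lemma Df_step_self (J : SimpleGraph V) {lam : ℝ} (hl : 0 < lam) {a b : V} (hab : J.Adj a b) :
    Df J lam a s(a, b) = Rf J lam a * (lam * Rf (vdel J a) lam b) := by
  have h1 := Zf_pos J hl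
  have h2 := Zf_pos (vdel J a) hl
  rw [Df, Nf_step_self J lam hab, Nf_eq_zero (vdel J a) lam (by simp [vdel])]
  simp only [Rf]
  field_simp
  simp

lemma Df_self_left (J : SimpleGraph V) (lam : ℝ) (a b : V) :
    Df (J.deleteEdges {s(a, b)}) lam a s(a, b) = 0 :=
  Df_eq_zero _ _ _ (by simp)

lemma Df_self_right (J : SimpleGraph V) (lam : ℝ) (a b : V) :
    Df (vdel J a) lam b s(a, b) = 0 :=
  Df_eq_zero _ _ _ (by simp [vdel])

/-- The right-hand side of the recursion for the total influence: `R₁`, `S₁` are the uncovered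
probability and total influence of `a` in `J - ab`, and `R₂`, `S₂` those of `b` in `J - a`. The
first factor is the uncovered probability of `a` in `J`. -/
noncomputable def stepVal (lam R₁ S₁ R₂ S₂ : ℝ) : ℝ :=
  (R₁⁻¹ + lam * R₂)⁻¹ * (R₁⁻¹ * S₁ + lam * R₂ * (1 + S₂))

lemma sum_stepVal (J : SimpleGraph V) {lam : ℝ} (hl : 0 < lam) {a b : V} (hab : J.Adj a b) :
    stepVal lam (Rf (J.deleteEdges {s(a, b)}) lam a) (Sf (J.deleteEdges {s(a, b)}) lam a)
      (Rf (vdel J a) lam b) (Sf (vdel J a) lam b) =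
    ∑ f, Rf J lam a * ((Rf (J.deleteEdges {s(a, b)}) lam a)⁻¹ *
      |Df (J.deleteEdges {s(a, b)}) lam a f| + lam * Rf (vdel J a) lam b *
        ((if f = s(a, b) then 1 else 0) + |Df (vdel J a) lam b f|)) := by
  rw [← Finset.mul_sum, Finset.sum_add_distrib, ← Finset.mul_sum, ← Finset.mul_sum,
    Finset.sum_add_distrib, Finset.sum_ite_eq', if_pos (Finset.mem_univ _), stepVal,
    ← Rf_step J hl hab, inv_inv]
  rfl

lemma Sf_le_step (J : SimpleGraph V) {lam : ℝ} (hl : 0 < lam) {a b : V} (hab : J.Adj a b) :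
    Sf J lam a ≤
      stepVal lam (Rf (J.deleteEdges {s(a, b)}) lam a) (Sf (J.deleteEdges {s(a, b)}) lam a)
        (Rf (vdel J a) lam b) (Sf (vdel J a) lam b) := by
  rw [sum_stepVal J hl hab]
  refine Finset.sum_le_sum fun f _ => ?_
  have h1 := Rf_pos J hl a
  have h2 := Rf_pos (vdel J a) hl b
  have h3 := Rf_pos (J.deleteEdges {s(a, b)}) hl a
  by_cases hf : f = s(a, b)
  · subst hf
    rw [Df_step_self J hl hab, Df_self_left, Df_self_right, abs_of_pos (by positivity)]
    simp
  · rw [Df_step J hl hab hf, abs_mul, abs_of_pos h1, if_neg hf, zero_add]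
    refine mul_le_mul_of_nonneg_left ((abs_sub _ _).trans_eq ?_) h1.le
    rw [abs_mul, abs_mul, abs_of_pos (inv_pos.2 h3), abs_of_pos (mul_pos hl h2)]

/-- The recursion is an equality as soon as no edge is influenced from both sides of `ab`. -/
lemma Sf_eq_step (J : SimpleGraph V) {lam : ℝ} (hl : 0 < lam) {a b : V} (hab : J.Adj a b)
    (h0 : ∀ f, Df (J.deleteEdges {s(a, b)}) lam a f = 0 ∨ Df (vdel J a) lam b f = 0) :
    Sf J lam a =
      stepVal lam (Rf (J.deleteEdges {s(a, b)}) lam a) (Sf (J.deleteEdges {s(a, b)}) lam a)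
        (Rf (vdel J a) lam b) (Sf (vdel J a) lam b) := by
  rw [sum_stepVal J hl hab]
  refine Finset.sum_congr rfl fun f _ => ?_
  have h1 := Rf_pos J hl a
  have h2 := Rf_pos (vdel J a) hl b
  have h3 := Rf_pos (J.deleteEdges {s(a, b)}) hl a
  by_cases hf : f = s(a, b)
  · subst hf
    rw [Df_step_self J hl hab, Df_self_left, Df_self_right, abs_of_pos (by positivity)]
    simp
  · rw [Df_step J hl hab hf, abs_mul, abs_of_pos h1, if_neg hf, zero_add]
    congr 1
    rcases h0 f with h | h <;> rw [h] <;>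
      simp [abs_mul, abs_of_pos h3, abs_of_pos hl, abs_of_pos h2]

lemma stepVal_mono {lam R₁ S₁ R₂ S₂ S₁' S₂' : ℝ} (hl : 0 < lam) (h1 : 0 < R₁) (h2 : 0 < R₂)
    (h3 : S₁ ≤ S₁') (h4 : S₂ ≤ S₂') : stepVal lam R₁ S₁ R₂ S₂ ≤ stepVal lam R₁ S₁' R₂ S₂' := by
  unfold stepVal
  gcongr

/-- Forcing `ab` into the matching deletes `a` and `b`, and forcing it out deletes `ab`: the
influence of an edge is the sum of two vertex influences, up to sign. -/
lemma mdInfluence_eq (J : SimpleGraph V) {lam : ℝ} (hl : 0 < lam) {a b : V} (hab : J.Adj a b)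
    {f : Sym2 V} (hf : f ≠ s(a, b)) :
    mdInfluence J lam s(a, b) f (fun _ => True) =
      -(Df (J.deleteEdges {s(a, b)}) lam a f + Df (vdel J a) lam b f) := by
  have h1 : mdCondPr J lam (fun M => f ∈ M) (fun M => s(a, b) ∈ M ∧ True) =
      Nf (vdel (vdel J a) b) lam f / Zf (vdel (vdel J a) b) lam := by
    have e1 := mdMass_mem J lam hab (fun M => f ∈ M)
    have e2 := mdMass_mem J lam hab (fun _ => True)
    simp only [Finset.mem_insert, hf, false_or, true_and] at e1 e2
    simp only [mdCondPr, and_true, e1, e2, Nf, Zf]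
    exact mul_div_mul_left _ _ hl.ne'
  have h2 : mdCondPr J lam (fun M => f ∈ M) (fun M => s(a, b) ∉ M ∧ True) =
      Nf (J.deleteEdges {s(a, b)}) lam f / Zf (J.deleteEdges {s(a, b)}) lam := by
    have e1 := mdMass_not_mem J lam s(a, b) (fun M => f ∈ M)
    have e2 := mdMass_not_mem J lam s(a, b) (fun _ => True)
    simp only [true_and] at e1 e2
    simp only [mdCondPr, and_true, e1, e2, Nf, Zf]
  rw [mdInfluence, h1, h2, Df, Df, vdel_deleteEdges]
  ring

end Basic

/-! ### Disjoint unions -/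

/-- Union of a set of pairs of `V` and a set of pairs of `W`, as pairs of `V ⊕ W`. -/
noncomputable def glue {V W : Type} (M : Finset (Sym2 V) × Finset (Sym2 W)) :
    Finset (Sym2 (V ⊕ W)) :=
  M.1.image (Sym2.map Sum.inl) ∪ M.2.image (Sym2.map Sum.inr)

section Sum

variable {V W : Type} [Fintype V] [Fintype W]

lemma inl_injective {V W : Type} : Function.Injective (Sym2.map (Sum.inl : V → V ⊕ W)) :=
  Sym2.map.injective Sum.inl_injective

lemma inr_injective {V W : Type} : Function.Injective (Sym2.map (Sum.inr : W → V ⊕ W)) :=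
  Sym2.map.injective Sum.inr_injective

lemma inl_ne_inr {V W : Type} (f : Sym2 V) (g : Sym2 W) :
    Sym2.map (Sum.inl : V → V ⊕ W) f ≠ Sym2.map Sum.inr g := by
  induction f using Sym2.ind
  induction g using Sym2.ind
  simp

lemma inl_mem_glue {V W : Type} (M : Finset (Sym2 V) × Finset (Sym2 W)) (f : Sym2 V) :
    Sym2.map Sum.inl f ∈ glue M ↔ f ∈ M.1 := by
  simp only [glue, Finset.mem_union, Finset.mem_image]
  constructor
  · rintro (⟨g, hg, h⟩ | ⟨g, hg, h⟩)
    · rwa [← inl_injective h]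
    · exact absurd h.symm (inl_ne_inr _ _)
  · exact fun h => .inl ⟨f, h, rfl⟩

lemma inr_mem_glue {V W : Type} (M : Finset (Sym2 V) × Finset (Sym2 W)) (f : Sym2 W) :
    Sym2.map Sum.inr f ∈ glue M ↔ f ∈ M.2 := by
  simp only [glue, Finset.mem_union, Finset.mem_image]
  constructor
  · rintro (⟨g, hg, h⟩ | ⟨g, hg, h⟩)
    · exact absurd h (inl_ne_inr _ _)
    · rwa [← inr_injective h]
  · exact fun h => .inr ⟨f, h, rfl⟩

lemma glue_injective {V W : Type} : Function.Injective (glue (V := V) (W := W)) := by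
  intro M N h
  refine Prod.ext (Finset.ext fun f => ?_) (Finset.ext fun f => ?_)
  · rw [← inl_mem_glue, h, inl_mem_glue]
  · rw [← inr_mem_glue, h, inr_mem_glue]

lemma card_glue {V W : Type} (M : Finset (Sym2 V) × Finset (Sym2 W)) :
    (glue M).card = M.1.card + M.2.card := by
  rw [glue, Finset.card_union_of_disjoint, Finset.card_image_of_injective _ inl_injective,
    Finset.card_image_of_injective _ inr_injective]
  rw [Finset.disjoint_left]
  intro f h1 h2
  obtain ⟨g, -, rfl⟩ := Finset.mem_image.1 h1
  obtain ⟨g', -, h⟩ := Finset.mem_image.1 h2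
  exact inl_ne_inr _ _ h.symm

lemma inl_mem_edgeSet {V W : Type} (A : SimpleGraph V) (B : SimpleGraph W) (f : Sym2 V) :
    Sym2.map Sum.inl f ∈ (A.sum B).edgeSet ↔ f ∈ A.edgeSet := by
  induction f using Sym2.ind; simp

lemma inr_mem_edgeSet {V W : Type} (A : SimpleGraph V) (B : SimpleGraph W) (f : Sym2 W) :
    Sym2.map Sum.inr f ∈ (A.sum B).edgeSet ↔ f ∈ B.edgeSet := by
  induction f using Sym2.ind; simp

lemma mem_edgeSet_sum {V W : Type} {A : SimpleGraph V} {B : SimpleGraph W} {f : Sym2 (V ⊕ W)}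
    (h : f ∈ (A.sum B).edgeSet) :
    (∃ g ∈ A.edgeSet, Sym2.map Sum.inl g = f) ∨ ∃ g ∈ B.edgeSet, Sym2.map Sum.inr g = f := by
  induction f using Sym2.ind with
  | _ x y =>
    rcases x with x | x <;> rcases y with y | y
    · exact .inl ⟨s(x, y), by simpa using h, rfl⟩
    · simp at h
    · simp at h
    · exact .inr ⟨s(x, y), by simpa using h, rfl⟩

lemma isMatchingSet_glue {V W : Type} (A : SimpleGraph V) (B : SimpleGraph W)
    (M : Finset (Sym2 V) × Finset (Sym2 W)) :
    IsMatchingSet (A.sum B) (glue M) ↔ IsMatchingSet A M.1 ∧ IsMatchingSet B M.2 := by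
  constructor
  · rintro ⟨h1, h2⟩
    refine ⟨⟨fun f hf => ?_, fun f hf g hg hne v hv hv' => ?_⟩,
      ⟨fun f hf => ?_, fun f hf g hg hne v hv hv' => ?_⟩⟩
    · exact (inl_mem_edgeSet A B f).1 (h1 ((inl_mem_glue M f).2 hf))
    · exact h2 _ ((inl_mem_glue M f).2 hf) _ ((inl_mem_glue M g).2 hg) (inl_injective.ne hne)
        (Sum.inl v) (Sym2.mem_map.2 ⟨v, hv, rfl⟩) (Sym2.mem_map.2 ⟨v, hv', rfl⟩)
    · exact (inr_mem_edgeSet A B f).1 (h1 ((inr_mem_glue M f).2 hf))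
    · exact h2 _ ((inr_mem_glue M f).2 hf) _ ((inr_mem_glue M g).2 hg) (inr_injective.ne hne)
        (Sum.inr v) (Sym2.mem_map.2 ⟨v, hv, rfl⟩) (Sym2.mem_map.2 ⟨v, hv', rfl⟩)
  · rintro ⟨⟨h1, h2⟩, ⟨h3, h4⟩⟩
    constructor
    · intro f hf
      rcases Finset.mem_union.1 hf with hf | hf
      · obtain ⟨g, hg, rfl⟩ := Finset.mem_image.1 hf
        exact (inl_mem_edgeSet A B g).2 (h1 hg)
      · obtain ⟨g, hg, rfl⟩ := Finset.mem_image.1 hf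
        exact (inr_mem_edgeSet A B g).2 (h3 hg)
    · intro f hf f' hf' hne v hv hv'
      rcases Finset.mem_union.1 hf with hf | hf <;> rcases Finset.mem_union.1 hf' with hf' | hf' <;>
        obtain ⟨g, hg, rfl⟩ := Finset.mem_image.1 hf <;>
        obtain ⟨g', hg', rfl⟩ := Finset.mem_image.1 hf' <;>
        obtain ⟨w, hw, rfl⟩ := Sym2.mem_map.1 hv <;>
        obtain ⟨w', hw', h⟩ := Sym2.mem_map.1 hv'
      · obtain rfl := Sum.inl_injective h
        exact h2 g hg g' hg' (fun h => hne (by rw [h])) _ hw hw'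
      · simp at h
      · simp at h
      · obtain rfl := Sum.inr_injective h
        exact h4 g hg g' hg' (fun h => hne (by rw [h])) _ hw hw'

/-- A matching of a disjoint union is a pair of matchings. -/
lemma mdMass_sum (A : SimpleGraph V) (B : SimpleGraph W) (lam : ℝ)
    (P : Finset (Sym2 (V ⊕ W)) → Prop) (PA : Finset (Sym2 V) → Prop) (PB : Finset (Sym2 W) → Prop)
    (hP : ∀ M, P (glue M) ↔ PA M.1 ∧ PB M.2) :
    mdMass (A.sum B) lam P = mdMass A lam PA * mdMass B lam PB := by
  unfold mdMass
  rw [Fintype.sum_mul_sum, ← Fintype.sum_prod_type', eq_comm]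
  refine Fintype.sum_of_injective glue glue_injective _ _ (fun M hM => ?_) fun M => ?_
  · have : mdWeight (A.sum B) lam M = 0 := by
      refine if_neg fun h => hM ⟨(M.preimage _ inl_injective.injOn,
        M.preimage _ inr_injective.injOn), Finset.ext fun f => ?_⟩
      by_cases hf : f ∈ (A.sum B).edgeSet
      · rcases mem_edgeSet_sum hf with ⟨g, -, rfl⟩ | ⟨g, -, rfl⟩
        · rw [inl_mem_glue, Finset.mem_preimage]
        · rw [inr_mem_glue, Finset.mem_preimage]
      · refine ⟨fun h' => ?_, fun h' => absurd (h.1 h') hf⟩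
        rcases Finset.mem_union.1 h' with h' | h' <;>
          obtain ⟨g, hg, rfl⟩ := Finset.mem_image.1 h' <;> simpa using hg
    simp [this]
  · by_cases h1 : PA M.1 <;> by_cases h2 : PB M.2 <;> by_cases h3 : IsMatchingSet A M.1 <;>
      by_cases h4 : IsMatchingSet B M.2 <;>
      simp [mdWeight, hP, isMatchingSet_glue, h1, h2, h3, h4, card_glue, pow_add]

lemma Zf_sum (A : SimpleGraph V) (B : SimpleGraph W) (lam : ℝ) :
    Zf (A.sum B) lam = Zf A lam * Zf B lam :=
  mdMass_sum A B lam _ _ _ (by simp)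

lemma Nf_sum_inl (A : SimpleGraph V) (B : SimpleGraph W) (lam : ℝ) (f : Sym2 V) :
    Nf (A.sum B) lam (Sym2.map Sum.inl f) = Nf A lam f * Zf B lam :=
  mdMass_sum A B lam _ _ _ (by simp [inl_mem_glue])

lemma Nf_sum_inr (A : SimpleGraph V) (B : SimpleGraph W) (lam : ℝ) (f : Sym2 W) :
    Nf (A.sum B) lam (Sym2.map Sum.inr f) = Zf A lam * Nf B lam f :=
  mdMass_sum A B lam _ _ _ (by simp [inr_mem_glue])

lemma vdel_sum_inl {V W : Type} (A : SimpleGraph V) (B : SimpleGraph W) (a : V) :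
    vdel (A.sum B) (Sum.inl a) = (vdel A a).sum B := by
  ext x y
  rcases x with x | x <;> rcases y with y | y <;> simp [vdel]

lemma vdel_sum_inr {V W : Type} (A : SimpleGraph V) (B : SimpleGraph W) (b : W) :
    vdel (A.sum B) (Sum.inr b) = A.sum (vdel B b) := by
  ext x y
  rcases x with x | x <;> rcases y with y | y <;> simp [vdel]

lemma Rf_sum_inl (A : SimpleGraph V) (B : SimpleGraph W) {lam : ℝ} (hl : 0 < lam) (a : V) :
    Rf (A.sum B) lam (Sum.inl a) = Rf A lam a := by
  rw [Rf, vdel_sum_inl, Zf_sum, Zf_sum, mul_div_mul_right _ _ (Zf_pos B hl).ne', Rf]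

lemma Rf_sum_inr (A : SimpleGraph V) (B : SimpleGraph W) {lam : ℝ} (hl : 0 < lam) (b : W) :
    Rf (A.sum B) lam (Sum.inr b) = Rf B lam b := by
  rw [Rf, vdel_sum_inr, Zf_sum, Zf_sum, mul_div_mul_left _ _ (Zf_pos A hl).ne', Rf]

lemma Df_inl_inl (A : SimpleGraph V) (B : SimpleGraph W) {lam : ℝ} (hl : 0 < lam) (a : V)
    (f : Sym2 V) : Df (A.sum B) lam (Sum.inl a) (Sym2.map Sum.inl f) = Df A lam a f := by
  have h := (Zf_pos B hl).ne'
  rw [Df, vdel_sum_inl, Zf_sum, Zf_sum, Nf_sum_inl, Nf_sum_inl, mul_div_mul_right _ _ h,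
    mul_div_mul_right _ _ h, Df]

lemma Df_inr_inr (A : SimpleGraph V) (B : SimpleGraph W) {lam : ℝ} (hl : 0 < lam) (b : W)
    (f : Sym2 W) : Df (A.sum B) lam (Sum.inr b) (Sym2.map Sum.inr f) = Df B lam b f := by
  have h := (Zf_pos A hl).ne'
  rw [Df, vdel_sum_inr, Zf_sum, Zf_sum, Nf_sum_inr, Nf_sum_inr, mul_div_mul_left _ _ h,
    mul_div_mul_left _ _ h, Df]

lemma Df_inl_inr (A : SimpleGraph V) (B : SimpleGraph W) {lam : ℝ} (hl : 0 < lam) (a : V)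
    (f : Sym2 W) : Df (A.sum B) lam (Sum.inl a) (Sym2.map Sum.inr f) = 0 := by
  rw [Df, vdel_sum_inl, Zf_sum, Zf_sum, Nf_sum_inr, Nf_sum_inr,
    mul_div_mul_left _ _ (Zf_pos A hl).ne', mul_div_mul_left _ _ (Zf_pos _ hl).ne', sub_self]

lemma Df_inr_inl (A : SimpleGraph V) (B : SimpleGraph W) {lam : ℝ} (hl : 0 < lam) (b : W)
    (f : Sym2 V) : Df (A.sum B) lam (Sum.inr b) (Sym2.map Sum.inl f) = 0 := by
  rw [Df, vdel_sum_inr, Zf_sum, Zf_sum, Nf_sum_inl, Nf_sum_inl,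
    mul_div_mul_right _ _ (Zf_pos B hl).ne', mul_div_mul_right _ _ (Zf_pos _ hl).ne', sub_self]

lemma Sf_sum_inl (A : SimpleGraph V) (B : SimpleGraph W) {lam : ℝ} (hl : 0 < lam) (a : V) :
    Sf (A.sum B) lam (Sum.inl a) = Sf A lam a := by
  refine (Fintype.sum_of_injective _ inl_injective _ _ (fun f hf => ?_) fun f => ?_).symm
  · by_cases h : f ∈ (A.sum B).edgeSet
    · rcases mem_edgeSet_sum h with ⟨g, -, rfl⟩ | ⟨g, -, rfl⟩
      · exact absurd ⟨g, rfl⟩ hf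
      · rw [Df_inl_inr A B hl, abs_zero]
    · rw [Df_eq_zero _ _ _ h, abs_zero]
  · rw [Df_inl_inl A B hl]

lemma Sf_sum_inr (A : SimpleGraph V) (B : SimpleGraph W) {lam : ℝ} (hl : 0 < lam) (b : W) :
    Sf (A.sum B) lam (Sum.inr b) = Sf B lam b := by
  refine (Fintype.sum_of_injective _ inr_injective _ _ (fun f hf => ?_) fun f => ?_).symm
  · by_cases h : f ∈ (A.sum B).edgeSet
    · rcases mem_edgeSet_sum h with ⟨g, -, rfl⟩ | ⟨g, -, rfl⟩
      · rw [Df_inr_inl A B hl, abs_zero]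
      · exact absurd ⟨g, rfl⟩ hf
    · rw [Df_eq_zero _ _ _ h, abs_zero]
  · rw [Df_inr_inr A B hl]

/-! ### Joining two rooted trees by an edge -/

/-- Disjoint union of `A` and `B` with the additional edge `ab`. -/
def join {V W : Type} (A : SimpleGraph V) (a : V) (B : SimpleGraph W) (b : W) :
    SimpleGraph (V ⊕ W) :=
  A.sum B ⊔ SimpleGraph.edge (Sum.inl a) (Sum.inr b)

lemma join_adj {V W : Type} (A : SimpleGraph V) (a : V) (B : SimpleGraph W) (b : W) :
    (join A a B b).Adj (Sum.inl a) (Sum.inr b) := by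
  simp [join, SimpleGraph.edge_adj]

lemma join_deleteEdges {V W : Type} (A : SimpleGraph V) (a : V) (B : SimpleGraph W) (b : W) :
    (join A a B b).deleteEdges {s(Sum.inl a, Sum.inr b)} = A.sum B := by
  ext x y
  rcases x with x | x <;> rcases y with y | y <;> simp [join]

lemma vdel_join {V W : Type} (A : SimpleGraph V) (a : V) (B : SimpleGraph W) (b : W) :
    vdel (join A a B b) (Sum.inl a) = (vdel A a).sum B := by
  rw [← vdel_deleteEdges _ _ (Sum.inr b), join_deleteEdges, vdel_sum_inl]

lemma join_isTree {A : SimpleGraph V} (a : V) {B : SimpleGraph W} (b : W)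
    (hA : A.IsTree) (hB : B.IsTree) : (join A a B b).IsTree := by
  rw [SimpleGraph.isTree_iff_connected_and_card] at *
  refine ⟨hA.1.sum_sup_edge hB.1, ?_⟩
  have h1 : (join A a B b).edgeSet = insert s(Sum.inl a, Sum.inr b) (A.sum B).edgeSet := by
    have h : s(Sum.inl a, Sum.inr b) ∈ (join A a B b).edgeSet := join_adj A a B b
    rw [← join_deleteEdges A a B b, SimpleGraph.edgeSet_deleteEdges, Set.insert_sdiff_singleton,
      Set.insert_eq_of_mem h]
  have h2 := Nat.card_congr (SimpleGraph.edgeSetSumEquiv (G := A) (H := B))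
  rw [Nat.card_sum] at h2
  rw [h1, Nat.card_coe_set_eq, Set.ncard_insert_of_notMem (by simp) (Set.toFinite _),
    ← Nat.card_coe_set_eq, h2, Nat.card_sum]
  omega

lemma Df_join_zero (A : SimpleGraph V) (a : V) (B : SimpleGraph W) (b : W) {lam : ℝ}
    (hl : 0 < lam) (f : Sym2 (V ⊕ W)) :
    Df (A.sum B) lam (Sum.inl a) f = 0 ∨ Df ((vdel A a).sum B) lam (Sum.inr b) f = 0 := by
  by_cases h : f ∈ (A.sum B).edgeSet
  · rcases mem_edgeSet_sum h with ⟨g, -, rfl⟩ | ⟨g, -, rfl⟩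
    · exact .inr (Df_inr_inl _ _ hl _ _)
    · exact .inl (Df_inl_inr _ _ hl _ _)
  · exact .inl (Df_eq_zero _ _ _ h)

lemma Rf_join (A : SimpleGraph V) (a : V) (B : SimpleGraph W) (b : W) {lam : ℝ} (hl : 0 < lam) :
    (Rf (join A a B b) lam (Sum.inl a))⁻¹ = (Rf A lam a)⁻¹ + lam * Rf B lam b := by
  rw [Rf_step _ hl (join_adj A a B b), join_deleteEdges, vdel_join, Rf_sum_inl _ _ hl,
    Rf_sum_inr _ _ hl]

lemma Sf_join (A : SimpleGraph V) (a : V) (B : SimpleGraph W) (b : W) {lam : ℝ} (hl : 0 < lam) :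
    Sf (join A a B b) lam (Sum.inl a) =
      stepVal lam (Rf A lam a) (Sf A lam a) (Rf B lam b) (Sf B lam b) := by
  have h := Sf_eq_step _ hl (join_adj A a B b)
  rw [join_deleteEdges, vdel_join, Rf_sum_inl _ _ hl, Rf_sum_inr _ _ hl, Sf_sum_inl _ _ hl,
    Sf_sum_inr _ _ hl] at h
  exact h (Df_join_zero A a B b hl)

lemma totalInfluence_join (A : SimpleGraph V) (a : V) (B : SimpleGraph W) (b : W) {lam : ℝ}
    (hl : 0 < lam) [DecidableEq (V ⊕ W)] :
    totalInfluence (V ⊕ W) (join A a B b) lam s(Sum.inl a, Sum.inr b) =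
      Sf A lam a + Sf B lam b := by
  rw [← Sf_sum_inl A B hl, ← Sf_sum_inr (vdel A a) B hl, Sf, Sf, ← Finset.sum_add_distrib,
    totalInfluence]
  refine Finset.sum_congr rfl fun f _ => ?_
  have hJ := join_adj A a B b
  have h0 := Df_self_left (join A a B b) lam (Sum.inl a) (Sum.inr b)
  have h1 := Df_self_right (join A a B b) lam (Sum.inl a) (Sum.inr b)
  rw [join_deleteEdges] at h0
  rw [vdel_join] at h1
  split_ifs with h
  · rw [mdInfluence_eq _ hl hJ h.2, join_deleteEdges, vdel_join, abs_neg]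
    rcases Df_join_zero A a B b hl f with h | h <;> rw [h] <;> simp
  · by_cases hf : f = s(Sum.inl a, Sum.inr b)
    · rw [hf, h0, h1]; simp
    · have hf' : f ∉ (join A a B b).edgeSet := fun h' => h ⟨h', hf⟩
      have h2 : f ∉ (A.sum B).edgeSet := fun h' =>
        hf' (SimpleGraph.edgeSet_mono le_sup_left h')
      have h3 : f ∉ ((vdel A a).sum B).edgeSet := fun h' => hf' <| by
        rw [← vdel_join A a B b, mem_edgeSet_vdel] at h'
        exact h'.1
      rw [Df_eq_zero _ _ _ h2, Df_eq_zero _ _ _ h3]; simp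

end Sum

/-- Degree of `x`, in the form used by the main statement. -/
noncomputable def dg {V : Type} (G : SimpleGraph V) (x : V) : ℕ := {u : V | G.Adj x u}.ncard

lemma dg_join_le {V W : Type} [Fintype V] [Fintype W] (A : SimpleGraph V) (a : V)
    (B : SimpleGraph W) (b : W) {d : ℕ} (hA : ∀ x, dg A x ≤ d) (hB : ∀ x, dg B x ≤ d)
    (ha : dg A a + 1 ≤ d) (hb : dg B b + 1 ≤ d) (x : V ⊕ W) : dg (join A a B b) x ≤ d := by
  rcases x with x | x
  · by_cases hx : x = a
    · subst hx
      have : {u | (join A x B b).Adj (Sum.inl x) u} ⊆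
          insert (Sum.inr b) (Sum.inl '' {u | A.Adj x u}) := by
        rintro (u | u) <;> simp [join, SimpleGraph.edge_adj]
      refine (Set.ncard_le_ncard this).trans ((Set.ncard_insert_le _ _).trans ?_)
      rw [Set.ncard_image_of_injective _ Sum.inl_injective]
      exact ha
    · have : {u | (join A a B b).Adj (Sum.inl x) u} ⊆ Sum.inl '' {u | A.Adj x u} := by
        rintro (u | u) <;> simp [join, SimpleGraph.edge_adj, hx]
      refine (Set.ncard_le_ncard this).trans ?_
      rw [Set.ncard_image_of_injective _ Sum.inl_injective]
      exact hA x
  · by_cases hx : x = b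
    · subst hx
      have : {u | (join A a B x).Adj (Sum.inr x) u} ⊆
          insert (Sum.inl a) (Sum.inr '' {u | B.Adj x u}) := by
        rintro (u | u) <;> simp [join, SimpleGraph.edge_adj]
      refine (Set.ncard_le_ncard this).trans ((Set.ncard_insert_le _ _).trans ?_)
      rw [Set.ncard_image_of_injective _ Sum.inr_injective]
      exact hb
    · have : {u | (join A a B b).Adj (Sum.inr x) u} ⊆ Sum.inr '' {u | B.Adj x u} := by
        rintro (u | u) <;> simp [join, SimpleGraph.edge_adj, hx]
      refine (Set.ncard_le_ncard this).trans ?_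
      rw [Set.ncard_image_of_injective _ Sum.inr_injective]
      exact hB x

lemma dg_join_root {V W : Type} [Fintype V] [Fintype W] (A : SimpleGraph V) (a : V)
    (B : SimpleGraph W) (b : W) : dg (join A a B b) (Sum.inl a) ≤ dg A a + 1 := by
  have : {u | (join A a B b).Adj (Sum.inl a) u} ⊆
      insert (Sum.inr b) (Sum.inl '' {u | A.Adj a u}) := by
    rintro (u | u) <;> simp [join, SimpleGraph.edge_adj]
  refine (Set.ncard_le_ncard this).trans ((Set.ncard_insert_le _ _).trans ?_)
  rw [Set.ncard_image_of_injective _ Sum.inl_injective]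
  rfl

/-! ### The self-avoiding-walk tree -/

section Tree

variable {V : Type} [Fintype V]

lemma dg_mono {G H : SimpleGraph V} (h : G ≤ H) (x : V) : dg G x ≤ dg H x :=
  Set.ncard_le_ncard fun _ hu => h hu

lemma dg_lt {G H : SimpleGraph V} (h : G ≤ H) {x y : V} (hG : ¬ G.Adj x y) (hH : H.Adj x y) :
    dg G x + 1 ≤ dg H x :=
  Set.ncard_lt_ncard ⟨fun _ hu => h hu, fun h' => hG (h' hH)⟩

lemma vdel_le {V : Type} (G : SimpleGraph V) (a : V) : vdel G a ≤ G := fun _ _ h => h.1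

lemma vdel_of_isolated {V : Type} {G : SimpleGraph V} {r : V} (h : ∀ w, ¬ G.Adj r w) : vdel G r = G := by
  ext x y
  refine ⟨fun h => h.1, fun hxy => ⟨hxy, ?_, ?_⟩⟩
  · rintro rfl; exact h _ hxy
  · rintro rfl; exact h _ hxy.symm

lemma Rf_of_isolated {G : SimpleGraph V} {r : V} (h : ∀ w, ¬ G.Adj r w) {lam : ℝ}
    (hl : 0 < lam) : Rf G lam r = 1 := by
  rw [Rf, vdel_of_isolated h, div_self (Zf_pos G hl).ne']

lemma Sf_of_isolated {G : SimpleGraph V} {r : V} (h : ∀ w, ¬ G.Adj r w) (lam : ℝ) :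
    Sf G lam r = 0 :=
  Finset.sum_eq_zero fun f _ => by rw [Df, vdel_of_isolated h, sub_self, abs_zero]

/-- Self-avoiding-walk tree of a rooted graph: the root has the same probability of being uncovered,
at least the same total influence, and degrees do not grow. Branching on an edge `rb` at the root
produces the two smaller rooted graphs `(G - rb, r)` and `(G - r, b)`. -/
lemma exists_tree {lam : ℝ} (hl : 0 < lam) (d : ℕ) (G : SimpleGraph V) (r : V)
    (hd : ∀ x, dg G x ≤ d) :
    ∃ (W : Type) (_ : Fintype W) (T : SimpleGraph W) (ρ : W), T.IsTree ∧ (∀ x, dg T x ≤ d) ∧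
      dg T ρ ≤ dg G r ∧ Rf T lam ρ = Rf G lam r ∧ Sf G lam r ≤ Sf T lam ρ := by
  induction hn : G.edgeSet.ncard using Nat.strong_induction_on generalizing G r with
  | _ n ih =>
  subst hn
  by_cases h : ∀ w, ¬ G.Adj r w
  · refine ⟨Unit, inferInstance, ⊥, (), ?_, ?_, ?_, ?_, ?_⟩
    · exact SimpleGraph.IsTree.of_subsingleton
    · simp [dg]
    · simp [dg]
    · rw [Rf_of_isolated h hl, Rf_of_isolated (by simp) hl]
    · rw [Sf_of_isolated h, Sf_of_isolated (by simp)]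
  · push Not at h
    obtain ⟨b, hb⟩ := h
    have hlt : ∀ H : SimpleGraph V, H ≤ G → ¬ H.Adj r b → H.edgeSet.ncard < G.edgeSet.ncard :=
      fun H hH hrb => Set.ncard_lt_ncard
        ⟨SimpleGraph.edgeSet_mono hH, fun h' => hrb (h' (a := s(r, b)) hb)⟩
    have hle₁ : G.deleteEdges {s(r, b)} ≤ G := G.deleteEdges_le _
    have hle₂ := vdel_le G r
    have hn₁ : ¬ (G.deleteEdges {s(r, b)}).Adj r b := by simp
    have hn₂ : ¬ (vdel G r).Adj r b := fun h => h.2.1 rfl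
    obtain ⟨W₁, i₁, T₁, ρ₁, ht₁, hd₁, hr₁, hR₁, hS₁⟩ :=
      ih _ (hlt _ hle₁ hn₁) _ r (fun x => (dg_mono hle₁ x).trans (hd x)) rfl
    obtain ⟨W₂, i₂, T₂, ρ₂, ht₂, hd₂, hr₂, hR₂, hS₂⟩ :=
      ih _ (hlt _ hle₂ hn₂) _ b (fun x => (dg_mono hle₂ x).trans (hd x)) rfl
    have hg₁ := dg_lt hle₁ hn₁ hb
    have hg₂ := dg_lt hle₂ (fun h => hn₂ h.symm) hb.symm
    have := hd r
    have := hd b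
    refine ⟨W₁ ⊕ W₂, inferInstance, join T₁ ρ₁ T₂ ρ₂, Sum.inl ρ₁, join_isTree _ _ ht₁ ht₂,
      dg_join_le _ _ _ _ hd₁ hd₂ (by omega) (by omega), ?_, ?_, ?_⟩
    · have := dg_join_root T₁ ρ₁ T₂ ρ₂
      omega
    · rw [← inv_inj, Rf_join _ _ _ _ hl, Rf_step G hl hb, hR₁, hR₂]
    · rw [Sf_join _ _ _ _ hl, hR₁, hR₂]
      exact (Sf_le_step G hl hb).trans
        (stepVal_mono hl (Rf_pos _ hl _) (Rf_pos _ hl _) hS₁ hS₂)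

end Tree

/-- **Reduction of total influence from graphs to trees** (Theorem 6.2): for every graph
`G` of maximum degree `Δ_G ≥ 1`, fugacity `λ > 0` and edge `e` of `G`, there is a finite
tree `T` of maximum degree at most `Δ_G` and an edge `e'` of `T` such that the total
absolute influence of `e` in `G` is at most the total absolute influence of `e'` in `T`. -/
theorem influence_graph_to_tree
    {V : Type} [Fintype V] [DecidableEq V]
    (G : SimpleGraph V) [DecidableRel G.Adj] (hΔ : 1 ≤ G.maxDegree)
    (lam : ℝ) (hlam : 0 < lam)
    (e : Sym2 V) (he : e ∈ G.edgeFinset) :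
    ∃ (W : Type) (iF : Fintype W) (iD : DecidableEq W) (T : SimpleGraph W),
      T.IsTree ∧
      (∀ w : W, {u : W | T.Adj w u}.ncard ≤ G.maxDegree) ∧
      ∃ e' : Sym2 W, e' ∈ T.edgeSet ∧
        ∑ f ∈ G.edgeFinset.erase e, |mdInfluence G lam e f (fun _ => True)| ≤
          @totalInfluence W iF iD T lam e' := by
  induction e using Sym2.ind with
  | _ a b =>
  have hab : G.Adj a b := by simpa using he
  have hd : ∀ x, dg G x ≤ G.maxDegree := fun x => by
    refine le_of_eq_of_le ?_ (G.degree_le_maxDegree x)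
    rw [← SimpleGraph.card_neighborSet_eq_degree, ← Nat.card_eq_fintype_card, Nat.card_coe_set_eq]
    rfl
  -- The two sides of the tree edge come from `a` in `G - ab` and from `b` in `G - a`.
  have hle₁ : G.deleteEdges {s(a, b)} ≤ G := G.deleteEdges_le _
  have hle₂ := vdel_le G a
  have hn₁ : ¬ (G.deleteEdges {s(a, b)}).Adj a b := by simp
  have hn₂ : ¬ (vdel G a).Adj b a := fun h => h.2.2 rfl
  obtain ⟨W₁, i₁, T₁, ρ₁, ht₁, hd₁, hr₁, -, hS₁⟩ :=
    exists_tree hlam G.maxDegree _ a (fun x => (dg_mono hle₁ x).trans (hd x))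
  obtain ⟨W₂, i₂, T₂, ρ₂, ht₂, hd₂, hr₂, -, hS₂⟩ :=
    exists_tree hlam G.maxDegree _ b (fun x => (dg_mono hle₂ x).trans (hd x))
  have hg₁ := dg_lt hle₁ hn₁ hab
  have hg₂ := dg_lt hle₂ hn₂ hab.symm
  have := hd a
  have := hd b
  refine ⟨W₁ ⊕ W₂, inferInstance, inferInstance, join T₁ ρ₁ T₂ ρ₂, join_isTree _ _ ht₁ ht₂,
    dg_join_le _ _ _ _ hd₁ hd₂ (by omega) (by omega), s(Sum.inl ρ₁, Sum.inr ρ₂),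
    join_adj _ _ _ _, ?_⟩
  rw [totalInfluence_join _ _ _ _ hlam]
  refine le_trans ?_ (add_le_add hS₁ hS₂)
  rw [Sf, Sf, ← Finset.sum_add_distrib]
  refine (Finset.sum_le_sum fun f hf => ?_).trans
    (Finset.sum_le_univ_sum_of_nonneg fun f => add_nonneg (abs_nonneg _) (abs_nonneg _))
  rw [mdInfluence_eq G hlam hab (Finset.ne_of_mem_erase hf), abs_neg]
  exact abs_add_le _ _
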